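/- arXiv:2409.16026 — 3 statements merged into one kernel-verified Lean document; each statement's English description precedes it below -/
import Mathlib

section
/- For every integer k ≥ 0, Σ_{n=1}^∞ n^{k-1} / C(2n,n) = (2/3)^k · ( (1/2)·p_{k-1}(1/4) + (π/(3√3))·q_{k-1}(1/4) ). In particular this value lies in ℚ + ℚ·(π/√3). -/
open Polynomial

/-- Lehmer's polynomials `q_k(x)` for `k ≥ -1`, shifted so that `lehmerQ n = q_{n-1}`:
`q_{-1}(x) = 1` and `q_{k+1}(x) = (2(k+1)x+1) q_k(x) + 2x(1-x) q_k'(x)`. -/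
noncomputable def lehmerQ : ℕ → Polynomial ℝ
  | 0 => 1
  | n + 1 => (C (2 * (n : ℝ)) * X + 1) * lehmerQ n + (2 * X * (1 - X)) * derivative (lehmerQ n)

/-- Lehmer's polynomials `p_k(x)` for `k ≥ -1`, shifted so that `lehmerP n = p_{n-1}`:
`p_{-1}(x) = 0` and `p_{k+1}(x) = 2(kx+1) p_k(x) + 2x(1-x) p_k'(x) + q_k(x)`. -/
noncomputable def lehmerP : ℕ → Polynomial ℝ
  | 0 => 0
  | n + 1 => C 2 * (C ((n : ℝ) - 1) * X + 1) * lehmerP n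
      + (2 * X * (1 - X)) * derivative (lehmerP n) + lehmerQ n

/-- The coefficient of `y ^ n` in `y⁻¹ ∑_{m ≥ 1} m ^ (k - 1) (4 y) ^ m / C(2m, m)`. -/
noncomputable def lehmerCoeff (k n : ℕ) : ℝ :=
  ((n : ℝ) + 1) ^ ((k : ℤ) - 1) * 4 ^ (n + 1) / (Nat.centralBinom (n + 1) : ℝ)

/-- The function `y⁻¹ ∑_{m ≥ 1} m ^ (k - 1) (4 y) ^ m / C(2m, m)`. -/
noncomputable def lehmerSeries (k : ℕ) (y : ℝ) : ℝ :=
  ∑' n : ℕ, lehmerCoeff k n * y ^ n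

theorem lehmerCoeff_succ (k n : ℕ) :
    lehmerCoeff (k + 1) n = lehmerCoeff k n * ((n : ℝ) + 1) := by
  have hn : (n : ℝ) + 1 ≠ 0 := by positivity
  have h : ((k + 1 : ℕ) : ℤ) - 1 = ((k : ℤ) - 1) + 1 := by push_cast; ring
  rw [lehmerCoeff, lehmerCoeff, h, zpow_add_one₀ hn]
  ring

theorem lehmerCoeff_nonneg (k n : ℕ) : 0 ≤ lehmerCoeff k n := by
  unfold lehmerCoeff
  positivity

theorem lehmerCoeff_one_le (n : ℕ) : lehmerCoeff 1 n ≤ 2 * ((n : ℝ) + 1) := by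
  have hc : (0 : ℝ) < Nat.centralBinom (n + 1) := by
    exact_mod_cast Nat.centralBinom_pos (n + 1)
  have h : (4 : ℝ) ^ (n + 1) ≤ 2 * ((n : ℝ) + 1) * Nat.centralBinom (n + 1) := by
    exact_mod_cast Nat.four_pow_le_two_mul_self_mul_centralBinom (n + 1) n.succ_pos
  simpa [lehmerCoeff, div_le_iff₀ hc] using h

theorem lehmerCoeff_le (k n : ℕ) : lehmerCoeff k n ≤ 2 * ((n : ℝ) + 1) ^ k := by
  have hn : (0 : ℝ) < (n : ℝ) + 1 := by positivity
  induction k with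
  | zero =>
    have h := lehmerCoeff_one_le n
    rw [lehmerCoeff_succ] at h
    simpa using le_of_mul_le_mul_right h hn
  | succ k ih =>
    rw [lehmerCoeff_succ, pow_succ, ← mul_assoc]
    exact mul_le_mul_of_nonneg_right ih hn.le

theorem summable_lehmerCoeff_mul_pow (k : ℕ) {y : ℝ} (hy : |y| < 1) :
    Summable fun n => lehmerCoeff k n * y ^ n := by
  rcases eq_or_ne y 0 with rfl | h0
  · exact summable_of_ne_finset_zero (s := {0}) fun n hn => by
      simp only [Finset.mem_singleton] at hn
      simp [hn]
  · have hs : Summable fun n : ℕ => ((n : ℝ)) ^ k * |y| ^ n :=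
      summable_pow_mul_geometric_of_norm_lt_one k (by simpa using hy)
    have hs' := (((summable_nat_add_iff 1).2 hs).mul_left (2 * |y|⁻¹))
    refine Summable.of_norm_bounded hs' fun n => ?_
    rw [norm_mul, norm_pow, Real.norm_eq_abs, Real.norm_eq_abs,
      abs_of_nonneg (lehmerCoeff_nonneg k n)]
    have hy0 : |y| ≠ 0 := by simpa using h0
    calc lehmerCoeff k n * |y| ^ n ≤ 2 * ((n : ℝ) + 1) ^ k * |y| ^ n :=
          mul_le_mul_of_nonneg_right (lehmerCoeff_le k n) (by positivity)
      _ = 2 * |y|⁻¹ * (((n + 1 : ℕ) : ℝ) ^ k * |y| ^ (n + 1)) := by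
          push_cast
          field_simp
          rw [pow_succ]

/-- The derivative of `y ↦ y * lehmerSeries k y` is `lehmerSeries (k + 1)`. -/
theorem exists_hasDerivAt_lehmerSeries (k : ℕ) {y : ℝ} (hy : |y| < 1) :
    ∃ d, HasDerivAt (lehmerSeries k) d y ∧
      lehmerSeries (k + 1) y = lehmerSeries k y + y * d := by
  obtain ⟨r, hyr, hr⟩ := exists_between hy
  have hr0 : 0 < r := (abs_nonneg y).trans_lt hyr
  have hsr : Summable fun n => lehmerCoeff (k + 1) n * r ^ n :=
    summable_lehmerCoeff_mul_pow (k + 1) (by rwa [abs_of_pos hr0])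
  have hbound : ∀ n : ℕ, ∀ z ∈ Metric.ball (0 : ℝ) r,
      ‖lehmerCoeff k n * (n * z ^ (n - 1))‖ ≤ r⁻¹ * (lehmerCoeff (k + 1) n * r ^ n) := by
    intro n z hz
    have hz' : |z| < r := by simpa using hz
    have hc := lehmerCoeff_nonneg k n
    rw [lehmerCoeff_succ, norm_mul, norm_mul, norm_pow, Real.norm_of_nonneg hc,
      Real.norm_of_nonneg n.cast_nonneg, Real.norm_eq_abs]
    rcases n with _ | n
    · simp; positivity
    · have hp : |z| ^ n ≤ r ^ n := pow_le_pow_left₀ (abs_nonneg z) hz'.le n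
      have : r⁻¹ * (lehmerCoeff k (n + 1) * (((n + 1 : ℕ) : ℝ) + 1) * r ^ (n + 1))
          = lehmerCoeff k (n + 1) * ((((n + 1 : ℕ) : ℝ) + 1) * r ^ n) := by
        field_simp
        ring
      rw [this, Nat.add_sub_cancel]
      gcongr
      linarith
  have hball : y ∈ Metric.ball (0 : ℝ) r := by simpa using hyr
  have hd := hasDerivAt_tsum_of_isPreconnected (hsr.mul_left r⁻¹) Metric.isOpen_ball
    (convex_ball (0 : ℝ) r).isPreconnected
    (fun n z _ => (hasDerivAt_pow n z).const_mul (lehmerCoeff k n)) hbound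
    hball (summable_lehmerCoeff_mul_pow k hy) hball
  refine ⟨_, hd, ?_⟩
  have hsd : Summable fun n : ℕ => lehmerCoeff k n * (n * y ^ (n - 1)) :=
    Summable.of_norm_bounded (hsr.mul_left r⁻¹) fun n => hbound n y hball
  rw [lehmerSeries, lehmerSeries, ← tsum_mul_left,
    ← (summable_lehmerCoeff_mul_pow k hy).tsum_add (hsd.mul_left y)]
  refine tsum_congr fun n => ?_
  rw [lehmerCoeff_succ]
  rcases n with _ | n
  · simp
  · push_cast
    ring

theorem lehmerCoeff_recurrence (n : ℕ) :
    2 * lehmerCoeff 1 (n + 1) - lehmerCoeff 0 (n + 1) = 2 * lehmerCoeff 1 n := by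
  have hc : (Nat.centralBinom (n + 1) : ℝ) ≠ 0 := by
    exact_mod_cast Nat.centralBinom_ne_zero (n + 1)
  have hc' : (Nat.centralBinom (n + 1 + 1) : ℝ) ≠ 0 := by
    exact_mod_cast Nat.centralBinom_ne_zero (n + 1 + 1)
  have h : ((n : ℝ) + 1 + 1) * Nat.centralBinom (n + 1 + 1) =
      2 * (2 * ((n : ℝ) + 1) + 1) * Nat.centralBinom (n + 1) := by
    exact_mod_cast Nat.succ_mul_centralBinom_succ (n + 1)
  have hn : (n : ℝ) + 1 + 1 ≠ 0 := by positivity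
  simp only [lehmerCoeff, Nat.cast_one, sub_self, zpow_zero, Nat.cast_zero, zero_sub, zpow_neg_one,
    Nat.cast_add]
  field_simp
  linear_combination (-2 * 4 ^ (n + 1)) * h

/-- The first order linear differential equation satisfied by `y * lehmerSeries 0 y`. -/
theorem lehmerSeries_one {y : ℝ} (hy : |y| < 1) :
    2 * (1 - y) * lehmerSeries 1 y = 2 + lehmerSeries 0 y := by
  have h0 := summable_lehmerCoeff_mul_pow 0 hy
  have h1 := summable_lehmerCoeff_mul_pow 1 hy
  have hs := (h1.mul_left 2).sub h0
  have key : 2 * lehmerSeries 1 y - lehmerSeries 0 y = 2 + y * (2 * lehmerSeries 1 y) := by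
    unfold lehmerSeries
    rw [← tsum_mul_left, ← (h1.mul_left 2).tsum_sub h0, hs.tsum_eq_zero_add, ← tsum_mul_left]
    congr 1
    · norm_num [lehmerCoeff, Nat.centralBinom_eq_two_mul_choose]
    · refine tsum_congr fun n => ?_
      linear_combination y ^ (n + 1) * lehmerCoeff_recurrence n
  linear_combination key

theorem lehmerSeries_eq (k : ℕ) {y : ℝ} (hy : |y| < 1) :
    (2 * (1 - y)) ^ k * lehmerSeries k y =
      2 * (lehmerP k).eval y + (lehmerQ k).eval y * lehmerSeries 0 y := by
  induction k generalizing y with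
  | zero => simp [lehmerP, lehmerQ]
  | succ k ih =>
    obtain ⟨d, hd, hS⟩ := exists_hasDerivAt_lehmerSeries k hy
    obtain ⟨e, he, hS0⟩ := exists_hasDerivAt_lehmerSeries 0 hy
    have hlin : HasDerivAt (fun z : ℝ => 2 * (1 - z)) (-2) y := by
      simpa using ((hasDerivAt_id y).const_sub 1).const_mul 2
    have hl := (hlin.fun_pow k).fun_mul hd
    have hr := (((lehmerP k).hasDerivAt y).const_mul 2).fun_add
      (((lehmerQ k).hasDerivAt y).fun_mul he)
    have hev : (fun z => 2 * (lehmerP k).eval z + (lehmerQ k).eval z * lehmerSeries 0 z) =ᶠ[nhds y]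
        fun z => (2 * (1 - z)) ^ k * lehmerSeries k z := by
      filter_upwards [(isOpen_lt continuous_abs continuous_const).mem_nhds hy] with z hz
      exact (ih hz).symm
    have hder := hl.unique (hr.congr_of_eventuallyEq hev.symm)
    have hpow : (2 * (1 - y)) * ((k : ℝ) * (2 * (1 - y)) ^ (k - 1)) =
        k * (2 * (1 - y)) ^ k := by
      rcases k with _ | k
      · simp
      · rw [Nat.add_sub_cancel, pow_succ]; ring
    have hS1 := lehmerSeries_one hy
    rw [zero_add] at hS0
    have ihy := ih hy
    simp only [lehmerP, lehmerQ, eval_add, eval_mul, eval_sub, eval_C, eval_X, eval_one,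
      eval_ofNat]
    rw [hS, pow_succ]
    rw [hS0] at hS1
    linear_combination (2 * (1 - y) * y) * hder + (2 * (1 - y) + 2 * k * y) * ihy
      + 2 * y * lehmerSeries k y * hpow + (lehmerQ k).eval y * hS1

theorem lehmerSeries_zero_sq {x : ℝ} (hx : |x| < 1) :
    √(1 - x ^ 2) * (x * lehmerSeries 0 (x ^ 2)) = 2 * Real.arcsin x := by
  have hderiv : ∀ z ∈ Metric.ball (0 : ℝ) 1, HasDerivAt
      (fun z => √(1 - z ^ 2) * (z * lehmerSeries 0 (z ^ 2)) - 2 * Real.arcsin z) 0 z := by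
    intro z hz
    have hz1 : |z| < 1 := by simpa using hz
    have hsq : z ^ 2 < 1 := (sq_lt_one_iff_abs_lt_one z).2 hz1
    have hpos : 0 < 1 - z ^ 2 := by linarith
    have hy : |z ^ 2| < 1 := by rwa [abs_of_nonneg (sq_nonneg z)]
    obtain ⟨e, he, hS0⟩ := exists_hasDerivAt_lehmerSeries 0 hy
    have hS1 := lehmerSeries_one hy
    rw [zero_add] at hS0
    rw [hS0] at hS1
    have hp : HasDerivAt (fun z : ℝ => z ^ 2) (2 * z) z := by simpa using hasDerivAt_pow 2 z
    have hroot := (hp.const_sub 1).sqrt hpos.ne'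
    have hcomp : HasDerivAt (fun z : ℝ => lehmerSeries 0 (z ^ 2)) (e * (2 * z)) z :=
      he.comp (h := fun z : ℝ => z ^ 2) z hp
    have harc := Real.hasDerivAt_arcsin (abs_lt.1 hz1).1.ne' (abs_lt.1 hz1).2.ne
    have h := (hroot.fun_mul ((hasDerivAt_id' z).fun_mul hcomp)).fun_sub (harc.const_mul 2)
    refine h.congr_deriv ?_
    have hs0 : √(1 - z ^ 2) ≠ 0 := (Real.sqrt_pos.2 hpos).ne'
    have hs2 : √(1 - z ^ 2) ^ 2 = 1 - z ^ 2 := Real.sq_sqrt hpos.le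
    field_simp
    rw [hs2]
    linear_combination hS1
  have hconst := Metric.isOpen_ball.is_const_of_deriv_eq_zero
    (convex_ball (0 : ℝ) 1).isPreconnected
    (fun z hz => (hderiv z hz).differentiableAt.differentiableWithinAt)
    (fun z hz => (hderiv z hz).deriv)
    (show x ∈ Metric.ball (0 : ℝ) 1 by simpa using hx)
    (Metric.mem_ball_self one_pos)
  simp only [Real.arcsin_zero, zero_mul, mul_zero, sub_zero] at hconst
  linarith

theorem lehmerSeries_zero_quarter :
    lehmerSeries 0 (1 / 4) = 4 * (Real.pi / (3 * √3)) := by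
  have h := lehmerSeries_zero_sq (x := 1 / 2) (by rw [abs_of_pos] <;> norm_num)
  have harc : Real.arcsin (1 / 2) = Real.pi / 6 := by
    rw [← Real.sin_pi_div_six]
    exact Real.arcsin_sin (by linarith [Real.pi_pos]) (by linarith [Real.pi_pos])
  have hroot : √(1 - (1 / 2 : ℝ) ^ 2) = √3 / 2 := by
    rw [show (1 - (1 / 2 : ℝ) ^ 2) = 3 / 2 ^ 2 by norm_num, Real.sqrt_div (by norm_num),
      Real.sqrt_sq (by norm_num)]
  rw [harc, hroot, show ((1 / 2 : ℝ) ^ 2) = 1 / 4 by norm_num] at h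
  have h3 : √3 ≠ 0 := by positivity
  field_simp
  linear_combination 12 * h

theorem tsum_zpow_div_centralBinom (k : ℕ) :
    ∑' n : ℕ, ((n : ℝ) + 1) ^ ((k : ℤ) - 1) / (Nat.centralBinom (n + 1) : ℝ) =
      1 / 4 * lehmerSeries k (1 / 4) := by
  rw [lehmerSeries, ← tsum_mul_left]
  refine tsum_congr fun n => ?_
  rw [lehmerCoeff, one_div_pow, pow_succ]
  field_simp

theorem lehmerQ_mem_lifts (k : ℕ) : lehmerQ k ∈ lifts (algebraMap ℚ ℝ) := by
  induction k with
  | zero => exact one_mem _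
  | succ k ih =>
    obtain ⟨Q, hQ⟩ := (mem_lifts _).1 ih
    refine (mem_lifts _).2
      ⟨(C (2 * (k : ℚ)) * X + 1) * Q + (2 * X * (1 - X)) * derivative Q, ?_⟩
    simp [lehmerQ, ← hQ, derivative_map]

theorem lehmerP_mem_lifts (k : ℕ) : lehmerP k ∈ lifts (algebraMap ℚ ℝ) := by
  induction k with
  | zero => exact zero_mem _
  | succ k ih =>
    obtain ⟨P, hP⟩ := (mem_lifts _).1 ih
    obtain ⟨Q, hQ⟩ := (mem_lifts _).1 (lehmerQ_mem_lifts k)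
    refine (mem_lifts _).2 ⟨C 2 * (C ((k : ℚ) - 1) * X + 1) * P
      + (2 * X * (1 - X)) * derivative P + Q, ?_⟩
    simp [lehmerP, ← hP, ← hQ, derivative_map]

theorem exists_rat_eval_eq_of_mem_lifts {f : ℝ[X]} (hf : f ∈ lifts (algebraMap ℚ ℝ)) (x : ℚ) :
    ∃ r : ℚ, f.eval (x : ℝ) = r := by
  obtain ⟨g, rfl⟩ := (mem_lifts _).1 hf
  exact ⟨g.eval x, by simpa using eval_map_apply (algebraMap ℚ ℝ) x⟩

/-- **Lehmer.** For every integer `k ≥ 0`,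
`ζ_CB(1-k) = ∑_{n=1}^∞ n^{k-1}/C(2n,n)
  = (2/3)^k ( (1/2) p_{k-1}(1/4) + (π/(3√3)) q_{k-1}(1/4) )`,
and in particular this value lies in `ℚ + ℚ (π/√3)`. -/
theorem cbs_negative_integer_values (k : ℕ) :
    (∑' n : ℕ, ((n : ℝ) + 1) ^ ((k : ℤ) - 1) / (Nat.centralBinom (n + 1) : ℝ) =
      (2 / 3) ^ k * (1 / 2 * (lehmerP k).eval (1 / 4) +
        Real.pi / (3 * Real.sqrt 3) * (lehmerQ k).eval (1 / 4))) ∧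
    ∃ q₁ q₂ : ℚ,
      ∑' n : ℕ, ((n : ℝ) + 1) ^ ((k : ℤ) - 1) / (Nat.centralBinom (n + 1) : ℝ) =
        (q₁ : ℝ) + (q₂ : ℝ) * (Real.pi / Real.sqrt 3) := by
  have hval : ∑' n : ℕ, ((n : ℝ) + 1) ^ ((k : ℤ) - 1) / (Nat.centralBinom (n + 1) : ℝ) =
      (2 / 3) ^ k * (1 / 2 * (lehmerP k).eval (1 / 4) +
        Real.pi / (3 * Real.sqrt 3) * (lehmerQ k).eval (1 / 4)) := by
    have h := lehmerSeries_eq k (y := 1 / 4) (by rw [abs_of_pos] <;> norm_num)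
    rw [lehmerSeries_zero_quarter, show (2 * (1 - 1 / 4) : ℝ) = 3 / 2 by norm_num] at h
    have hpow : (2 / 3 : ℝ) ^ k * (3 / 2) ^ k = 1 := by
      rw [← mul_pow]
      norm_num
    rw [tsum_zpow_div_centralBinom]
    linear_combination (2 / 3 : ℝ) ^ k / 4 * h - lehmerSeries k (1 / 4) / 4 * hpow
  refine ⟨hval, ?_⟩
  obtain ⟨a, ha⟩ := exists_rat_eval_eq_of_mem_lifts (lehmerP_mem_lifts k) (1 / 4)
  obtain ⟨b, hb⟩ := exists_rat_eval_eq_of_mem_lifts (lehmerQ_mem_lifts k) (1 / 4)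
  push_cast at ha hb
  refine ⟨(2 / 3) ^ k * (1 / 2 * a), (2 / 3) ^ k * (b / 3), ?_⟩
  rw [hval, ha, hb]
  push_cast
  field_simp
end

section
/- For every integer k ≥ 1, every real number a not of the form -j/2 with j a nonnegative integer, and every real z with 0 < z < 1: Φ_HCB(k,a,z) = (4^a / (C(2a,a)·a^k)) · z^{2a} · _{k+1}F_k(1, a, …, a ; a+1/2, a+1, …, a+1 ; z²), where the upper parameter list consists of 1 followed by k copies of a, and the lower parameter list consists of a+1/2 followed by k-1 copies of a+1. -/
/-- The generalized binomial coefficient `C(x,y) = Γ(x+1)/(Γ(y+1) Γ(x-y+1))`. -/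
noncomputable def genBinom (x y : ℝ) : ℝ :=
  Real.Gamma (x + 1) / (Real.Gamma (y + 1) * Real.Gamma (x - y + 1))

/-- The Hurwitz–Lerch type central binomial series
`Φ_HCB(s,a,z) = ∑_{n≥0} (2z)^{2(n+a)} / ( C(2(n+a), n+a) (n+a)^s )`. -/
noncomputable def PhiHCB (s : ℤ) (a z : ℝ) : ℝ :=
  ∑' n : ℕ, (2 * z) ^ (2 * ((n : ℝ) + a)) /
    (genBinom (2 * ((n : ℝ) + a)) ((n : ℝ) + a) * ((n : ℝ) + a) ^ s)

/-- The shifted factorial (Pochhammer symbol) `(α)_n = α(α+1)⋯(α+n-1)`, `(α)_0 = 1`. -/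
def poch (α : ℝ) : ℕ → ℝ
  | 0 => 1
  | n + 1 => poch α n * (α + n)

/-- The generalized hypergeometric series with upper parameters `as`, lower parameters `bs`:
`∑_{n≥0} (∏_{α ∈ as} (α)_n) / ((∏_{β ∈ bs} (β)_n) n!) zⁿ`. -/
noncomputable def pFq (as bs : List ℝ) (z : ℝ) : ℝ :=
  ∑' n : ℕ, (as.map fun α => poch α n).prod / ((bs.map fun β => poch β n).prod *
    (Nat.factorial n : ℝ)) * z ^ n

theorem poch_ne_zero {α : ℝ} (h : ∀ m : ℕ, α + m ≠ 0) (n : ℕ) : poch α n ≠ 0 := by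
  induction n with
  | zero => exact one_ne_zero
  | succ n ih => exact mul_ne_zero ih (h n)

theorem poch_one (n : ℕ) : poch 1 n = n.factorial := by
  induction n with
  | zero => simp [poch]
  | succ n ih =>
    rw [poch, ih, Nat.factorial_succ]
    push_cast
    ring

theorem poch_add_one_mul (α : ℝ) (n : ℕ) : poch (α + 1) n * α = poch α n * (α + n) := by
  induction n with
  | zero => simp [poch]
  | succ n ih =>
    simp only [poch]
    push_cast
    linear_combination (α + 1 + n) * ih

theorem genBinom_two_mul_self (x : ℝ) :
    genBinom (2 * x) x = Real.Gamma (2 * x + 1) / Real.Gamma (x + 1) ^ 2 := by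
  rw [genBinom, show 2 * x - x + 1 = x + 1 by ring, sq]

theorem genBinom_two_mul_self_ne_zero {a : ℝ} (ha : ∀ j : ℕ, 2 * a + j ≠ 0) :
    genBinom (2 * a) a ≠ 0 := by
  rw [genBinom_two_mul_self]
  refine div_ne_zero (Real.Gamma_ne_zero fun m h => ha (m + 1) ?_)
    (pow_ne_zero 2 (Real.Gamma_ne_zero fun m h => ha (2 * (m + 1)) ?_))
  · push_cast
    linear_combination h
  · push_cast
    linear_combination 2 * h

theorem genBinom_two_mul_add_one {x : ℝ} (h₁ : x + 1 ≠ 0) (h₂ : 2 * x + 1 ≠ 0) :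
    genBinom (2 * (x + 1)) (x + 1) * (x + 1) = genBinom (2 * x) x * (4 * (x + 1 / 2)) := by
  have h₃ : 2 * x + 1 + 1 ≠ 0 := fun h => h₁ (by linear_combination h / 2)
  rw [genBinom_two_mul_self, genBinom_two_mul_self,
    show 2 * (x + 1) + 1 = 2 * x + 1 + 1 + 1 by ring, Real.Gamma_add_one h₃,
    Real.Gamma_add_one h₂, Real.Gamma_add_one h₁]
  simp only [div_eq_mul_inv, mul_pow, mul_inv]
  field_simp
  ring

theorem genBinom_two_mul_nat_add {a : ℝ} (ha : ∀ j : ℕ, 2 * a + j ≠ 0) (n : ℕ) :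
    genBinom (2 * (n + a)) (n + a) * poch (a + 1) n =
      genBinom (2 * a) a * 4 ^ n * poch (a + 1 / 2) n := by
  induction n with
  | zero => simp [poch]
  | succ n ih =>
    have h₁ : (n : ℝ) + a + 1 ≠ 0 := fun h => ha (2 * (n + 1)) (by
      push_cast
      linear_combination 2 * h)
    have h₂ : 2 * ((n : ℝ) + a) + 1 ≠ 0 := fun h => ha (2 * n + 1) (by
      push_cast
      linear_combination h)
    have key := genBinom_two_mul_add_one h₁ h₂
    rw [show ((n + 1 : ℕ) : ℝ) + a = n + a + 1 by push_cast; ring]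
    simp only [poch]
    linear_combination poch (a + 1) n * key + 4 * (n + a + 1 / 2) * ih

/-- For every integer `k ≥ 1`, real `a` not of the form `-j/2` (`j ∈ ℤ_{≥0}`), and `0 < z < 1`:
`Φ_HCB(k,a,z) = (4^a/(C(2a,a) a^k)) z^{2a}
  ⬝ _{k+1}F_k(1, a, …, a ; a+1/2, a+1, …, a+1 ; z²)`,
where the upper parameters are `1` followed by `k` copies of `a` and the lower parameters are
`a+1/2` followed by `k-1` copies of `a+1`. -/
theorem phiHCB_pos_hypergeometric (k : ℕ) (hk : 1 ≤ k) (a : ℝ)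
    (ha : ∀ j : ℕ, a ≠ -(j : ℝ) / 2) (z : ℝ) (hz0 : 0 < z) (hz1 : z < 1) :
    PhiHCB k a z =
      (4 : ℝ) ^ a / (genBinom (2 * a) a * a ^ k) * z ^ (2 * a) *
        pFq ((1 : ℝ) :: List.replicate k a)
          ((a + 1 / 2) :: List.replicate (k - 1) (a + 1)) (z ^ 2) := by
  have ha' : ∀ j : ℕ, 2 * a + j ≠ 0 := fun j h => ha j (by linear_combination h / 2)
  have han : ∀ m : ℕ, a + m ≠ 0 := fun m h => ha' (2 * m) (by
    push_cast
    linear_combination 2 * h)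
  have ha1 : ∀ m : ℕ, a + 1 + m ≠ 0 := fun m h => han (m + 1) (by
    push_cast
    linear_combination h)
  have hah : ∀ m : ℕ, a + 1 / 2 + m ≠ 0 := fun m h => ha' (2 * m + 1) (by
    push_cast
    linear_combination 2 * h)
  have ha0 : a ≠ 0 := by simpa using han 0
  obtain ⟨k, rfl⟩ := Nat.exists_eq_add_of_le' hk
  rw [PhiHCB, pFq, ← tsum_mul_left]
  refine tsum_congr fun n => ?_
  have hB := genBinom_two_mul_self_ne_zero ha'
  have hQ := poch_ne_zero ha1 n
  have hP := poch_ne_zero hah n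
  have hn := han n
  have hpow : (2 * z) ^ (2 * ((n : ℝ) + a)) = 4 ^ a * z ^ (2 * a) * (4 ^ n * (z ^ 2) ^ n) := by
    have h2z : 0 < 2 * z := by positivity
    rw [mul_add, Real.rpow_add h2z, Real.mul_rpow two_pos.le hz0.le (z := 2 * a),
      Real.rpow_mul two_pos.le, show (2 : ℝ) * n = ((2 * n : ℕ) : ℝ) by push_cast; rfl,
      Real.rpow_natCast, pow_mul, mul_pow, mul_pow]
    norm_num
    ring
  have hbinom : genBinom (2 * (n + a)) (n + a) =
      genBinom (2 * a) a * 4 ^ n * poch (a + 1 / 2) n / poch (a + 1) n :=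
    eq_div_of_mul_eq hQ (genBinom_two_mul_nat_add ha' n)
  have hpoch : poch a n = poch (a + 1) n * a / (a + n) :=
    eq_div_of_mul_eq hn (poch_add_one_mul a n).symm
  have hfact : (n.factorial : ℝ) ≠ 0 := by positivity
  simp only [List.map_cons, List.map_replicate, List.prod_cons, List.prod_replicate,
    Nat.add_sub_cancel, zpow_natCast]
  rw [hpow, hbinom, poch_one, hpoch, add_comm (n : ℝ) a, div_pow, mul_pow]
  generalize poch (a + 1 / 2) n = P at hP ⊢
  field_simp
  ring
end

section
/- For every real number a not of the form -j/2 with j a nonnegative integer, and every real z with 0 < z < 1: (d/dz)( z^{2a-1} · ₂F₁(1/2, a-1/2; a+1/2; z²) ) = (2a-1)·z^{2a-2} / √(1-z²). -/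
/-- The Gauss hypergeometric series `₂F₁(α,β;γ;z) = ∑_{n≥0} (α)_n (β)_n / ((γ)_n n!) zⁿ`. -/
noncomputable def Gauss2F1 (α β γ z : ℝ) : ℝ :=
  ∑' n : ℕ, poch α n * poch β n / (poch γ n * (Nat.factorial n : ℝ)) * z ^ n

open Filter Topology

lemma poch_eq_ascPochhammer_eval (α : ℝ) (n : ℕ) : poch α n = (ascPochhammer ℝ n).eval α := by
  induction n with
  | zero => simp [poch]
  | succ n ih => rw [poch, ih, ascPochhammer_succ_eval]

lemma poch_mul_add (β : ℝ) (n : ℕ) : poch β n * (β + n) = β * poch (β + 1) n := by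
  induction n with
  | zero => simp [poch]
  | succ n ih =>
    rw [poch, ih, poch]
    push_cast
    ring

lemma poch_ne_zero_s11 {γ : ℝ} (hγ : ∀ k : ℕ, γ + k ≠ 0) (n : ℕ) : poch γ n ≠ 0 := by
  induction n with
  | zero => simp [poch]
  | succ n ih => exact mul_ne_zero ih (hγ n)

lemma abs_poch_half_div_factorial_le_one (n : ℕ) :
    |poch (1 / 2) n / (n.factorial : ℝ)| ≤ 1 := by
  rw [abs_div, Nat.abs_cast, div_le_one (by positivity)]
  induction n with
  | zero => simp [poch]
  | succ n ih =>
    rw [poch, abs_mul, Nat.factorial_succ, mul_comm (n + 1), Nat.cast_mul,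
      abs_of_nonneg (by positivity : (0 : ℝ) ≤ 1 / 2 + n)]
    gcongr
    push_cast
    linarith

/-- The binomial series `∑ (α)_n / n! xⁿ = (1 - x)^(-α)`. -/
lemma hasSum_poch_div_factorial_mul_pow (α : ℝ) {x : ℝ} (hx : |x| < 1) :
    HasSum (fun n : ℕ => poch α n / (n.factorial : ℝ) * x ^ n) (1 / (1 - x) ^ α) := by
  have h := (Real.one_div_one_sub_rpow_hasFPowerSeriesOnBall_zero α).hasSum
    (y := x) (by simpa [enorm_eq_nnnorm] using! hx)
  simp only [FormalMultilinearSeries.ofScalars_apply_eq, zero_add, smul_eq_mul] at h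
  refine h.congr_fun fun n => ?_
  congr 1
  rw [← Ring.multichoose_eq, div_eq_iff (by positivity), mul_comm, ← nsmul_eq_mul,
    Ring.factorial_nsmul_multichoose_eq_ascPochhammer, poch_eq_ascPochhammer_eval,
    Polynomial.ascPochhammer_smeval_eq_eval]

lemma exists_abs_poch_div_poch_add_one_le {β : ℝ} (hβ : ∀ k : ℕ, β + 1 + k ≠ 0) :
    ∃ C, ∀ n : ℕ, |poch β n / poch (β + 1) n| ≤ C := by
  have hlim : Tendsto (fun n : ℕ => poch β n / poch (β + 1) n) atTop (𝓝 0) := by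
    have h : Tendsto (fun n : ℕ => β / (β + n)) atTop (𝓝 0) :=
      tendsto_const_nhds.div_atTop
        (tendsto_atTop_add_const_left _ _ tendsto_natCast_atTop_atTop)
    refine h.congr' ?_
    filter_upwards [eventually_ge_atTop 1] with n hn
    obtain ⟨k, rfl⟩ := Nat.exists_eq_add_of_le hn
    have hk : β + ((1 + k : ℕ) : ℝ) ≠ 0 := by
      push_cast
      rw [← add_assoc]
      exact hβ k
    rw [div_eq_div_iff hk (poch_ne_zero_s11 hβ _), poch_mul_add]
  obtain ⟨C, hC⟩ := (Metric.isBounded_range_of_tendsto _ hlim).exists_norm_le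
  exact ⟨C, fun n => hC _ ⟨n, rfl⟩⟩

/-- A power series with bounded coefficients is differentiable termwise on the unit interval. -/
lemma exists_hasDerivAt_tsum_mul_pow {c : ℕ → ℝ} {C : ℝ} (hc : ∀ n, |c n| ≤ C) {x : ℝ}
    (hx : |x| < 1) :
    ∃ D, HasDerivAt (fun y => ∑' n : ℕ, c n * y ^ n) D x ∧
      HasSum (fun n : ℕ => n * c n * x ^ n) (x * D) := by
  obtain ⟨r, hxr, hr1⟩ := exists_between hx
  have hr0 : 0 < r := (abs_nonneg x).trans_lt hxr
  have hu : Summable fun n : ℕ => C * (n * r ^ (n - 1)) := by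
    refine Summable.mul_left C ?_
    have h := summable_pow_mul_geometric_of_norm_lt_one 1
      (by rwa [Real.norm_of_nonneg hr0.le] : ‖r‖ < 1)
    refine (h.mul_left r⁻¹).congr fun n => ?_
    cases n with
    | zero => simp
    | succ n =>
      rw [Nat.add_sub_cancel, pow_one, pow_succ]
      field_simp
  have hbound : ∀ n : ℕ, ∀ y ∈ Metric.ball (0 : ℝ) r,
      ‖c n * (n * y ^ (n - 1))‖ ≤ C * (n * r ^ (n - 1)) := by
    intro n y hy
    have hy' : |y| ≤ r := by simpa using (mem_ball_zero_iff.1 hy).le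
    rw [Real.norm_eq_abs, abs_mul, abs_mul, abs_pow, Nat.abs_cast]
    have := (abs_nonneg _).trans (hc n)
    gcongr
    exact hc n
  have hxmem : x ∈ Metric.ball (0 : ℝ) r := by simpa using hxr
  refine ⟨_, hasDerivAt_tsum_of_isPreconnected hu Metric.isOpen_ball
    (convex_ball (0 : ℝ) r).isPreconnected
    (fun n y _ => (hasDerivAt_pow n y).const_mul (c n)) hbound
    (Metric.mem_ball_self hr0) ?_ hxmem, ?_⟩
  · exact summable_of_ne_finset_zero (s := {0}) fun n hn => by
      simp [zero_pow (by simpa using hn : n ≠ 0)]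
  · have h := (Summable.of_norm_bounded hu fun n => hbound n x hxmem).hasSum.mul_left x
    refine h.congr_fun fun n => ?_
    cases n with
    | zero => simp
    | succ n =>
      rw [Nat.add_sub_cancel, pow_succ]
      ring

/-- The Euler operator relation `x F' + β F = β (1 - x)^(-1/2)` for
`F = ₂F₁(1/2, β; β + 1; ·)`. -/
lemma exists_hasDerivAt_gauss2F1_half {β : ℝ} (hβ : ∀ k : ℕ, β + 1 + k ≠ 0) {x : ℝ}
    (hx : |x| < 1) :
    ∃ D, HasDerivAt (Gauss2F1 (1 / 2) β (β + 1)) D x ∧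
      x * D + β * Gauss2F1 (1 / 2) β (β + 1) x = β / √(1 - x) := by
  obtain ⟨C, hC⟩ := exists_abs_poch_div_poch_add_one_le hβ
  set c : ℕ → ℝ := fun n =>
    poch (1 / 2) n * poch β n / (poch (β + 1) n * (n.factorial : ℝ))
  have hc : ∀ n, |c n| ≤ C := fun n => by
    have h : c n = poch (1 / 2) n / (n.factorial : ℝ) * (poch β n / poch (β + 1) n) := by
      rw [div_mul_div_comm, mul_comm (n.factorial : ℝ)]
    rw [h, abs_mul]
    exact (mul_le_of_le_one_left (abs_nonneg _)
      (abs_poch_half_div_factorial_le_one n)).trans (hC n)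
  obtain ⟨D, hD, hsum⟩ := exists_hasDerivAt_tsum_mul_pow hc hx
  have hF : HasSum (fun n => c n * x ^ n) (Gauss2F1 (1 / 2) β (β + 1) x) := by
    refine (Summable.of_norm_bounded
      ((summable_geometric_of_lt_one (abs_nonneg x) hx).mul_left C) fun n => ?_).hasSum
    rw [norm_mul, norm_pow, Real.norm_eq_abs, Real.norm_eq_abs]
    gcongr
    exact hc n
  refine ⟨D, hD, ?_⟩
  have hB := (hasSum_poch_div_factorial_mul_pow (1 / 2) hx).mul_left β
  rw [← Real.sqrt_eq_rpow, mul_one_div] at hB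
  refine (hsum.add (hF.mul_left β)).unique (hB.congr_fun fun n => ?_)
  have hcn : c n * (β + n) = β * (poch (1 / 2) n / (n.factorial : ℝ)) := by
    have hne := poch_ne_zero_s11 hβ n
    simp only [c]
    field_simp
    linear_combination poch (1 / 2) n * poch_mul_add β n
  linear_combination x ^ n * hcn

/-- For every real `a` not of the form `-j/2` (`j ∈ ℤ_{≥0}`) and every real `z` with `0 < z < 1`:
`(d/dz)( z^{2a-1} ₂F₁(1/2, a-1/2; a+1/2; z²) ) = (2a-1) z^{2a-2} / √(1-z²)`. -/
theorem deriv_rpow_mul_gauss2F1 (a : ℝ) (ha : ∀ j : ℕ, a ≠ -(j : ℝ) / 2)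
    (z : ℝ) (hz0 : 0 < z) (hz1 : z < 1) :
    deriv (fun w : ℝ => w ^ (2 * a - 1) * Gauss2F1 (1 / 2) (a - 1 / 2) (a + 1 / 2) (w ^ 2)) z =
      (2 * a - 1) * z ^ (2 * a - 2) / Real.sqrt (1 - z ^ 2) := by
  have hβ : ∀ k : ℕ, a - 1 / 2 + 1 + k ≠ 0 := fun k hk => ha (2 * k + 1) <| by
    push_cast
    linarith
  have hz2 : |z ^ 2| < 1 := by
    rw [abs_of_nonneg (by positivity)]
    exact pow_lt_one₀ hz0.le hz1 two_ne_zero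
  obtain ⟨D, hD, hEuler⟩ := exists_hasDerivAt_gauss2F1_half hβ hz2
  rw [show a - 1 / 2 + 1 = a + 1 / 2 by ring] at hD hEuler
  have hpow := Real.hasDerivAt_rpow_const (x := z) (p := 2 * a - 1) (Or.inl hz0.ne')
  have hcomp := HasDerivAt.comp (h := fun w : ℝ => w ^ 2) z hD (hasDerivAt_pow 2 z)
  refine (hpow.mul hcomp).deriv.trans ?_
  have hexp : z ^ (2 * a - 1) = z ^ (2 * a - 2) * z := by
    rw [← Real.rpow_add_one hz0.ne']
    ring_nf
  rw [hexp, show 2 * a - 1 - 1 = 2 * a - 2 by ring, Function.comp_apply]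
  linear_combination (2 * z ^ (2 * a - 2)) * hEuler
end
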